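/- arXiv:2312.01466 — 4 statements merged into one kernel-verified Lean document; each statement's English description precedes it below -/
import Mathlib

section
/- For every real number α > 0, the class K_α of hereditarily α-sparse finite graphs is indivisible if and only if α > 2. -/
open SimpleGraph

/-- `δ_α(G) = |V(G)| − α·e(G)`, where `e(G)` is the number of edges of `G`. -/
noncomputable def deltaAlpha (α : ℝ) {V : Type} (G : SimpleGraph V) : ℝ :=
  (Nat.card V : ℝ) - α * (Nat.card G.edgeSet : ℝ)

/-- `G ∈ K_α`: `δ_α(H) ≥ 0` for every induced subgraph `H` of `G`. -/
def MemKalpha (α : ℝ) {V : Type} (G : SimpleGraph V) : Prop :=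
  ∀ s : Set V, 0 ≤ deltaAlpha α (G.induce s)

/-- A class of finite simple graphs (indexed by the number of vertices) is indivisible. -/
def Indivisible (K : ∀ n : ℕ, SimpleGraph (Fin n) → Prop) : Prop :=
  ∀ (n : ℕ) (A : SimpleGraph (Fin n)), K n A → ∀ k : ℕ, 0 < k →
    ∃ (m : ℕ) (B : SimpleGraph (Fin m)), K m B ∧
      ∀ c : Fin m → Fin k, ∃ f : A ↪g B, ∀ x y, c (f x) = c (f y)

/-!
For `α > 2` a single edge already violates `δ_α ≥ 0`, so `K_α` consists of the edgeless graphs, and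
indivisibility is the pigeonhole principle. For `α ≤ 2` the class contains an edge, while `δ_α ≥ 0`
bounds the average degree of every induced subgraph by `2 / α`; hence members of `K_α` are
`⌊2 / α⌋`-degenerate, the greedy algorithm properly colours them with `⌊2 / α⌋ + 1` colours, and a
proper colouring has no monochromatic edge.
-/

section Degree

variable {V : Type*} {G : SimpleGraph V}

lemma card_mul_minDegree_le_two_mul_card_edgeFinset [Fintype V] (G : SimpleGraph V)
    [DecidableRel G.Adj] : Fintype.card V * G.minDegree ≤ 2 * G.edgeFinset.card := by
  rw [← G.sum_degrees_eq_twice_card_edges, ← smul_eq_mul]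
  exact Finset.card_nsmul_le_sum _ _ _ fun v _ => G.minDegree_le_degree v

lemma encard_neighborSet_inter_eq_degree_induce {s : Set V} (v : s)
    [Fintype ((G.induce s).neighborSet v)] :
    (G.neighborSet v ∩ s).encard = (G.induce s).degree v := by
  have himage : (↑) '' (G.induce s).neighborSet v = G.neighborSet v ∩ s :=
    (Subtype.image_preimage_coe s _).trans (Set.inter_comm _ _)
  rw [← himage, Subtype.val_injective.encard_image, Set.encard_eq_coe_toFinset_card,
    Set.toFinset_card, card_neighborSet_eq_degree]

end Degree

section Degenerate

variable {V : Type*} {G : SimpleGraph V} {d k : ℕ}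

/-- `d`-degeneracy: every nonempty finite set of vertices induces a subgraph with a vertex of degree
at most `d`. The graph itself may be infinite. -/
def IsDegenerate (G : SimpleGraph V) (d : ℕ) : Prop :=
  ∀ s : Finset V, s.Nonempty → ∃ v ∈ s, (G.neighborSet v ∩ s).encard ≤ d

lemma exists_color_ne_of_encard_lt {s : Set V} (c : V → Fin k) (hs : s.encard < k) :
    ∃ a, ∀ u ∈ s, c u ≠ a := by
  have himage : (c '' s).encard < (Set.univ : Set (Fin k)).encard := by
    simpa using (Set.encard_image_le c s).trans_lt hs
  obtain ⟨a, ha⟩ : ∃ a, a ∉ c '' s :=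
    (Set.ne_univ_iff_exists_notMem _).1 fun h => himage.ne (congrArg Set.encard h)
  exact ⟨a, fun u hu hua => ha ⟨u, hu, hua⟩⟩

lemma colorable_induce_iff {s : Set V} [NeZero k] :
    (G.induce s).Colorable k ↔
      ∃ c : V → Fin k, ∀ u ∈ s, ∀ w ∈ s, G.Adj u w → c u ≠ c w := by
  classical
  constructor
  · rintro ⟨C⟩
    refine ⟨fun u => if h : u ∈ s then C ⟨u, h⟩ else 0, fun u hu w hw huw => ?_⟩
    simpa only [hu, hw, dif_pos] using C.valid (v := ⟨u, hu⟩) (w := ⟨w, hw⟩) huw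
  · rintro ⟨c, hc⟩
    exact ⟨Coloring.mk (fun u => c u) fun {u w} huw => hc u u.2 w w.2 huw⟩

lemma colorable_induce_insert {s : Set V} {v : V} (hs : (G.induce s).Colorable k)
    (hv : (G.neighborSet v ∩ s).encard < k) : (G.induce (insert v s)).Colorable k := by
  classical
  have : NeZero k := ⟨by rintro rfl; simp at hv⟩
  obtain ⟨c, hc⟩ := colorable_induce_iff.1 hs
  obtain ⟨a, ha⟩ := exists_color_ne_of_encard_lt c hv
  refine colorable_induce_iff.2 ⟨Function.update c v a, fun u hu w hw huw => ?_⟩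
  rcases eq_or_ne u v with rfl | huv
  · have hws : w ∈ s := hw.resolve_left huw.ne'
    simpa only [Function.update_self, Function.update_of_ne huw.ne'] using (ha w ⟨huw, hws⟩).symm
  have hus : u ∈ s := hu.resolve_left huv
  rcases eq_or_ne w v with rfl | hwv
  · simpa only [Function.update_self, Function.update_of_ne huv] using ha u ⟨huw.symm, hus⟩
  · simpa only [Function.update_of_ne huv, Function.update_of_ne hwv] using
      hc u hus w (hw.resolve_left hwv) huw

lemma IsDegenerate.colorable_induce (hG : IsDegenerate G d) (s : Finset V) :
    (G.induce (s : Set V)).Colorable (d + 1) := by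
  classical
  induction s using Finset.strongInduction with
  | H s ih =>
    obtain rfl | hs := s.eq_empty_or_nonempty
    · have : IsEmpty ((∅ : Finset V) : Set V) := by simp
      exact .of_isEmpty _
    obtain ⟨v, hvs, hdeg⟩ := hG s hs
    have hlt : (G.neighborSet v ∩ (s.erase v : Finset V)).encard < (d + 1 : ℕ) :=
      calc (G.neighborSet v ∩ (s.erase v : Finset V)).encard
          ≤ (G.neighborSet v ∩ s).encard := by gcongr; exact s.erase_subset v
        _ ≤ d := hdeg
        _ < (d + 1 : ℕ) := by exact_mod_cast d.lt_succ_self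
    have hinsert := colorable_induce_insert (ih _ (Finset.erase_ssubset hvs)) hlt
    rwa [← Finset.coe_insert, Finset.insert_erase hvs] at hinsert

lemma colorable_of_forall_finset_colorable_induce
    (h : ∀ s : Finset V, (G.induce (s : Set V)).Colorable k) : G.Colorable k := by
  refine nonempty_hom_of_forall_finite_subgraph_hom fun H hH => ?_
  have hcol := h hH.toFinset
  rw [hH.coe_toFinset] at hcol
  exact hcol.some.comp ⟨id, fun {_ _} huw => H.adj_sub huw⟩

lemma IsDegenerate.colorable (hG : IsDegenerate G d) : G.Colorable (d + 1) :=
  colorable_of_forall_finset_colorable_induce hG.colorable_induce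

end Degenerate

section Kalpha

variable {V : Type} {G : SimpleGraph V} {α : ℝ}

lemma deltaAlpha_eq_card_sub [Fintype V] [Fintype G.edgeSet] :
    deltaAlpha α G = Fintype.card V - α * G.edgeFinset.card := by
  rw [deltaAlpha, Nat.card_eq_fintype_card, Nat.card_eq_fintype_card, edgeFinset_card]

lemma mul_minDegree_le_two_of_deltaAlpha_nonneg [Fintype V] [Nonempty V] [DecidableRel G.Adj]
    (hα : 0 ≤ α) (hG : 0 ≤ deltaAlpha α G) : α * G.minDegree ≤ 2 := by
  rw [deltaAlpha_eq_card_sub, sub_nonneg] at hG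
  have hdeg : (Fintype.card V * G.minDegree : ℝ) ≤ 2 * G.edgeFinset.card := by
    exact_mod_cast card_mul_minDegree_le_two_mul_card_edgeFinset G
  have hcard : (0 : ℝ) < Fintype.card V := by exact_mod_cast Fintype.card_pos
  refine le_of_mul_le_mul_left ?_ hcard
  calc Fintype.card V * (α * G.minDegree)
      = α * (Fintype.card V * G.minDegree) := by ring
    _ ≤ α * (2 * G.edgeFinset.card) := by gcongr
    _ = 2 * (α * G.edgeFinset.card) := by ring
    _ ≤ 2 * Fintype.card V := by gcongr
    _ = Fintype.card V * 2 := mul_comm _ _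

lemma MemKalpha.isDegenerate (hα : 0 < α) (hG : MemKalpha α G) : IsDegenerate G ⌊2 / α⌋₊ := by
  classical
  intro s hs
  have : Nonempty (s : Set V) := hs.to_subtype
  obtain ⟨v, hv⟩ := (G.induce (s : Set V)).exists_minimal_degree_vertex
  refine ⟨v, v.2, ?_⟩
  rw [encard_neighborSet_inter_eq_degree_induce, ← hv, Nat.cast_le]
  exact Nat.le_floor <| (le_div_iff₀' hα).2 <|
    mul_minDegree_le_two_of_deltaAlpha_nonneg hα.le (hG s)

lemma MemKalpha.colorable (hα : 0 < α) (hG : MemKalpha α G) : G.Colorable (⌊2 / α⌋₊ + 1) :=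
  (hG.isDegenerate hα).colorable

lemma deltaAlpha_nonneg_of_mul_card_sub_one_le_two [Finite V] (hα : 0 ≤ α)
    (hV : α * (Nat.card V - 1) ≤ 2) : 0 ≤ deltaAlpha α G := by
  classical
  have := Fintype.ofFinite V
  rw [Nat.card_eq_fintype_card] at hV
  have hedge : (G.edgeFinset.card : ℝ) ≤ Fintype.card V * (Fintype.card V - 1) / 2 := by
    rw [← Nat.cast_choose_two]
    exact_mod_cast G.card_edgeFinset_le_card_choose_two
  rw [deltaAlpha_eq_card_sub, sub_nonneg]
  calc α * G.edgeFinset.card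
      ≤ α * (Fintype.card V * (Fintype.card V - 1) / 2) := by gcongr
    _ = Fintype.card V / 2 * (α * (Fintype.card V - 1)) := by ring
    _ ≤ Fintype.card V / 2 * 2 := by gcongr
    _ = Fintype.card V := by ring

lemma memKalpha_of_mul_card_sub_one_le_two [Finite V] (hα : 0 ≤ α)
    (hV : α * (Nat.card V - 1) ≤ 2) (G : SimpleGraph V) : MemKalpha α G := fun s => by
  have hcard : Nat.card s ≤ Nat.card V := Finite.card_subtype_le (· ∈ s)
  refine deltaAlpha_nonneg_of_mul_card_sub_one_le_two hα (le_trans ?_ hV)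
  gcongr

lemma memKalpha_bot : MemKalpha α (⊥ : SimpleGraph V) := fun s => by
  simp [deltaAlpha]

lemma deltaAlpha_induce_pair_of_adj {u v : V} (huv : G.Adj u v) :
    deltaAlpha α (G.induce {u, v}) = 2 - α := by
  classical
  have htop : G.induce {u, v} = ⊤ := induce_eq_top.2 (isClique_pair.2 fun _ => huv)
  have hcard : Fintype.card ({u, v} : Set V) = 2 := by
    rw [← Nat.card_eq_fintype_card, Nat.card_coe_set_eq, Set.ncard_pair huv.ne]
  rw [htop, deltaAlpha_eq_card_sub, card_edgeFinset_top_eq_card_choose_two, hcard]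
  norm_num

lemma memKalpha_iff_eq_bot (hα : 2 < α) : MemKalpha α G ↔ G = ⊥ := by
  refine ⟨fun hG => eq_bot_iff_forall_not_adj.2 fun u v huv => ?_, fun h => h ▸ memKalpha_bot⟩
  linarith [hG {u, v}, deltaAlpha_induce_pair_of_adj (α := α) huv]

end Kalpha

section Indivisible

lemma exists_monochromatic_embedding_bot {W : Type*} [Fintype W] {k n : ℕ} [NeZero k]
    (hW : k * n ≤ Fintype.card W) (c : W → Fin k) :
    ∃ f : (⊥ : SimpleGraph (Fin n)) ↪g (⊥ : SimpleGraph W), ∀ x y, c (f x) = c (f y) := by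
  obtain ⟨a, ha⟩ := Fintype.exists_le_card_fiber_of_mul_le_card c (n := n) (by simpa using hW)
  obtain ⟨f⟩ : Nonempty (Fin n ↪ {w // c w = a}) :=
    Function.Embedding.nonempty_of_card_le (by simpa [Fintype.card_subtype] using ha)
  exact ⟨⟨f.trans (.subtype _), by simp⟩, fun x y => (f x).2.trans (f y).2.symm⟩

lemma indivisible_eq_bot : Indivisible fun _ G => G = ⊥ := by
  rintro n _ rfl k hk
  have : NeZero k := ⟨hk.ne'⟩
  exact ⟨k * n, ⊥, rfl, exists_monochromatic_embedding_bot (by simp)⟩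

lemma Indivisible.eq_bot_of_colorable {K : ∀ n : ℕ, SimpleGraph (Fin n) → Prop} {k : ℕ}
    (hK : Indivisible K) (hcol : ∀ n G, K n G → G.Colorable k) {n : ℕ} {A : SimpleGraph (Fin n)}
    (hA : K n A) : A = ⊥ := by
  refine eq_bot_iff_forall_not_adj.2 fun u v huv => ?_
  have hk : 0 < k := ((hcol n A hA).some u).pos
  obtain ⟨m, B, hB, hmono⟩ := hK n A hA k hk
  obtain ⟨C⟩ := hcol m B hB
  obtain ⟨f, hf⟩ := hmono C
  exact C.valid (f.map_adj_iff.2 huv) (hf u v)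

end Indivisible

theorem kalpha_indivisible_iff (α : ℝ) (hα : 0 < α) :
    Indivisible (fun n (G : SimpleGraph (Fin n)) => MemKalpha α G) ↔ 2 < α := by
  constructor
  · intro hK
    by_contra! hle
    have hedge : MemKalpha α (⊤ : SimpleGraph (Fin 2)) :=
      memKalpha_of_mul_card_sub_one_le_two hα.le (by norm_num [hle]) ⊤
    exact top_ne_bot (hK.eq_bot_of_colorable (fun _ _ hG => hG.colorable hα) hedge)
  · intro h
    simpa only [memKalpha_iff_eq_bot h] using indivisible_eq_bot
end

section
/- For every real number α > 0, K_α^+ = ⋃_{γ > α} K_γ; that is, a finite simple graph G satisfies δ_α(H) > 0 for every non-empty induced subgraph H of G if and only if there exists a real γ > α such that δ_γ(H) ≥ 0 for every induced subgraph H of G. -/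
open SimpleGraph

/-!
For a fixed finite graph `H`, the function `γ ↦ δ_γ(H)` is continuous, so finitely many strict
inequalities `0 < δ_α(H)` survive a small increase of `α`; a finite graph has only finitely many
induced subgraphs. Conversely, `δ_γ(H)` decreases in `γ`, strictly if `H` has an edge, and if `H`
has no edge then `δ_α(H) = |V(H)|`, which is positive as soon as `H` is non-empty.
-/

theorem continuous_deltaAlpha {V : Type} (G : SimpleGraph V) :
    Continuous fun γ : ℝ => deltaAlpha γ G := by
  unfold deltaAlpha
  fun_prop

theorem deltaAlpha_of_isEmpty (α : ℝ) {V : Type} [IsEmpty V] (G : SimpleGraph V) :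
    deltaAlpha α G = 0 := by
  simp [deltaAlpha, Subsingleton.elim G ⊥]

theorem deltaAlpha_pos_of_lt {α γ : ℝ} (hαγ : α < γ) {V : Type} [Finite V] [Nonempty V]
    (G : SimpleGraph V) (hG : 0 ≤ deltaAlpha γ G) : 0 < deltaAlpha α G := by
  rcases (Nat.card G.edgeSet).eq_zero_or_pos with h_edgeless | h_edge
  · simp [deltaAlpha, h_edgeless]
  · calc
      0 ≤ deltaAlpha γ G := hG
      _ < deltaAlpha α G := by unfold deltaAlpha; gcongr

theorem exists_gt_forall_deltaAlpha_pos {α : ℝ} {ι : Type*} [Finite ι] {W : ι → Type}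
    (H : ∀ i, SimpleGraph (W i)) (hH : ∀ i, 0 < deltaAlpha α (H i)) :
    ∃ γ : ℝ, α < γ ∧ ∀ i, 0 < deltaAlpha γ (H i) :=
  (Filter.eventually_all.2 fun i =>
    (continuous_deltaAlpha (H i)).continuousAt.eventually_const_lt (hH i)).exists_gt

theorem kalphaPlus_eq_union_kgamma (α : ℝ) (hα : 0 < α)
    (V : Type) [Fintype V] (G : SimpleGraph V) :
    (∀ s : Set V, s.Nonempty → 0 < deltaAlpha α (G.induce s)) ↔
      ∃ γ : ℝ, α < γ ∧ ∀ s : Set V, 0 ≤ deltaAlpha γ (G.induce s) := by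
  constructor
  · intro h
    obtain ⟨γ, hαγ, hγ⟩ := exists_gt_forall_deltaAlpha_pos
      (fun s : {s : Set V // s.Nonempty} => G.induce s.1) fun s => h s.1 s.2
    refine ⟨γ, hαγ, fun s => ?_⟩
    rcases s.eq_empty_or_nonempty with rfl | hs
    · exact (deltaAlpha_of_isEmpty γ _).ge
    · exact (hγ ⟨s, hs⟩).le
  · rintro ⟨γ, hαγ, hγ⟩ s hs
    have : Nonempty s := hs.to_subtype
    exact deltaAlpha_pos_of_lt hαγ (G.induce s) (hγ s)
end

section
/- For every real number α > 1, K_α is exactly the class of finite forests each of whose connected components has at most ⌊1/(α−1) + 1⌋ vertices; that is, a finite simple graph G satisfies δ_α(H) ≥ 0 for every induced subgraph H of G if and only if G is acyclic and every connected component of G has at most ⌊1/(α−1) + 1⌋ vertices. -/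
open SimpleGraph

/-!
`δ_α` is additive over connected components, so everything reduces to a connected graph on `n`
vertices. Such a graph has at least `n - 1` edges. If it has `n` or more then
`δ_α ≤ (1 - α) n < 0`; otherwise it is a tree, `δ_α = n - α (n - 1)`, and this is nonnegative
exactly when `n ≤ 1 / (α - 1) + 1`.
-/

section Components

variable {V W : Type*} {G : SimpleGraph V} {H : SimpleGraph W}

lemma isAcyclic_iff_forall_isTree_toSimpleGraph :
    G.IsAcyclic ↔ ∀ C : G.ConnectedComponent, C.toSimpleGraph.IsTree := by
  classical
  refine ⟨IsAcyclic.isTree_connectedComponent, fun hT v p hp ↦ ?_⟩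
  have hsupp : ∀ x ∈ p.support, x ∈ (G.connectedComponentMk v).supp := fun x hx ↦
    ConnectedComponent.sound (p.takeUntil x hx).reachable.symm
  refine (hT _).isAcyclic (p.induce _ hsupp) ?_
  refine Walk.IsCycle.of_map (f := (Embedding.induce _).toHom) ?_
  rwa [Walk.map_induce]

lemma card_supp_le_card_supp_map [Finite W] {f : G →g H} (hf : Function.Injective f)
    (C : G.ConnectedComponent) : Nat.card C.supp ≤ Nat.card (C.map f).supp := by
  have hmaps : Set.MapsTo f C.supp (C.map f).supp := by
    rintro v rfl
    rfl
  exact Nat.card_le_card_of_injective _ (hmaps.restrict_inj.mpr hf.injOn)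

lemma card_eq_sum_card_supp [Finite V] [Fintype G.ConnectedComponent] :
    Nat.card V = ∑ C : G.ConnectedComponent, Nat.card C.supp := by
  rw [← Nat.card_sigma]
  exact (Nat.card_congr (Equiv.sigmaFiberEquiv G.connectedComponentMk)).symm

lemma bijective_sigma_mapEdgeSet_toSimpleGraph_hom :
    Function.Bijective fun e : Σ C : G.ConnectedComponent, C.toSimpleGraph.edgeSet ↦
      e.1.toSimpleGraph_hom.mapEdgeSet e.2 := by
  constructor
  · rintro ⟨C, e, he⟩ ⟨D, e', he'⟩ heq
    have hval : e.map Subtype.val = e'.map Subtype.val := congrArg Subtype.val heq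
    obtain rfl : C = D := by
      obtain ⟨u, hu⟩ : ∃ u, u ∈ e := ⟨_, e.out_fst_mem⟩
      obtain ⟨v, -, hvu⟩ := Sym2.mem_map.mp (hval ▸ Sym2.mem_map.mpr ⟨u, hu, rfl⟩)
      exact ConnectedComponent.eq_of_common_vertex u.2 (hvu ▸ v.2)
    obtain rfl := Sym2.map.injective Subtype.val_injective hval
    rfl
  · rintro ⟨⟨u, v⟩, huv : G.Adj u v⟩
    have hv : v ∈ (G.connectedComponentMk u).supp :=
      ConnectedComponent.mem_supp_of_adj_mem_supp _ rfl huv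
    exact ⟨⟨G.connectedComponentMk u, s(⟨u, rfl⟩, ⟨v, hv⟩), huv⟩, rfl⟩

lemma card_edgeSet_eq_sum_card_edgeSet_toSimpleGraph [Finite V] [Fintype G.ConnectedComponent] :
    Nat.card G.edgeSet = ∑ C : G.ConnectedComponent, Nat.card C.toSimpleGraph.edgeSet := by
  rw [← Nat.card_sigma]
  exact (Nat.card_eq_of_bijective _ bijective_sigma_mapEdgeSet_toSimpleGraph_hom).symm

end Components

section DeltaAlpha

variable {α : ℝ} {V : Type} [Finite V] {G : SimpleGraph V}

lemma deltaAlpha_eq_sum_toSimpleGraph [Fintype G.ConnectedComponent] :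
    deltaAlpha α G = ∑ C : G.ConnectedComponent, deltaAlpha α C.toSimpleGraph := by
  simp only [deltaAlpha, Finset.sum_sub_distrib, ← Finset.mul_sum]
  rw [card_eq_sum_card_supp (G := G), card_edgeSet_eq_sum_card_edgeSet_toSimpleGraph]
  push_cast
  rfl

lemma deltaAlpha_of_isTree (hG : G.IsTree) :
    deltaAlpha α G = Nat.card V - α * (Nat.card V - 1) := by
  rw [deltaAlpha, ← (isTree_iff_connected_and_card.mp hG).2]
  push_cast
  ring

lemma deltaAlpha_nonneg_iff_of_isTree (hα : 1 < α) (hG : G.IsTree) :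
    0 ≤ deltaAlpha α G ↔ Nat.card V ≤ ⌊1 / (α - 1) + 1⌋₊ := by
  have hα' : 0 < α - 1 := sub_pos.mpr hα
  rw [deltaAlpha_of_isTree hG, Nat.le_floor_iff (by positivity), ← sub_le_iff_le_add,
    le_div_iff₀ hα']
  constructor <;> intro h <;> linarith

lemma isTree_of_deltaAlpha_nonneg (hα : 1 < α) (hG : G.Connected) (h : 0 ≤ deltaAlpha α G) :
    G.IsTree := by
  have := hG.nonempty
  have hV : (0 : ℝ) < Nat.card V := mod_cast Nat.card_pos
  have hlt : Nat.card G.edgeSet < Nat.card V := by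
    by_contra! hle
    have hle' : (Nat.card V : ℝ) ≤ Nat.card G.edgeSet := mod_cast hle
    refine h.not_gt ?_
    calc deltaAlpha α G
      _ ≤ Nat.card V - α * Nat.card V := by rw [deltaAlpha]; gcongr
      _ < 0 := sub_neg.mpr (lt_mul_of_one_lt_left hV hα)
  exact isTree_iff_connected_and_card.mpr
    ⟨hG, le_antisymm hlt hG.card_vert_le_card_edgeSet_add_one⟩

lemma deltaAlpha_nonneg_iff_of_connected (hα : 1 < α) (hG : G.Connected) :
    0 ≤ deltaAlpha α G ↔ G.IsTree ∧ Nat.card V ≤ ⌊1 / (α - 1) + 1⌋₊ :=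
  (and_iff_right_of_imp (isTree_of_deltaAlpha_nonneg hα hG)).symm.trans
    (and_congr_right (deltaAlpha_nonneg_iff_of_isTree hα))

end DeltaAlpha

theorem kalpha_eq_bounded_forests (α : ℝ) (hα : 1 < α)
    (V : Type) [Fintype V] (G : SimpleGraph V) :
    MemKalpha α G ↔
      (G.IsAcyclic ∧
        ∀ C : G.ConnectedComponent, Nat.card C.supp ≤ ⌊1 / (α - 1) + 1⌋₊) := by
  constructor
  · intro h
    rw [isAcyclic_iff_forall_isTree_toSimpleGraph, ← forall_and]
    exact fun C ↦
      (deltaAlpha_nonneg_iff_of_connected hα C.connected_toSimpleGraph).mp (h C.supp)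
  · rintro ⟨hG, hcard⟩ s
    have := Fintype.ofFinite (G.induce s).ConnectedComponent
    have htree := isAcyclic_iff_forall_isTree_toSimpleGraph.mp (hG.induce s)
    have hle (C : (G.induce s).ConnectedComponent) : Nat.card C.supp ≤ ⌊1 / (α - 1) + 1⌋₊ :=
      (card_supp_le_card_supp_map (f := (Embedding.induce s).toHom) Subtype.val_injective C).trans
        (hcard _)
    rw [deltaAlpha_eq_sum_toSimpleGraph]
    exact Finset.sum_nonneg fun C _ ↦
      (deltaAlpha_nonneg_iff_of_isTree hα (htree C)).mpr (hle C)
end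

section
/- The class of all finite perfect graphs is indivisible. -/
open SimpleGraph

/-- The clique number of a graph: the size of its largest clique. -/
noncomputable def cliqueNumber {V : Type} (G : SimpleGraph V) : ℕ :=
  sSup {k : ℕ | ∃ t : Finset V, G.IsNClique k t}

/-- A graph is perfect if for every induced subgraph `H`, the chromatic number of `H`
equals the size of the largest clique of `H`. -/
def IsPerfect {V : Type} (G : SimpleGraph V) : Prop :=
  ∀ s : Set V, (G.induce s).chromaticNumber = (cliqueNumber (G.induce s) : ℕ∞)

/-!
Perfection is preserved by the lexicographic product `G[H]`. To colour `G[H]` with as many colours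
as its largest clique, give each vertex `v` of `G` the clique number `w v` of the fibre over `v` as
weight and find a multicolouring of `G` whose number of colours is the largest weight of a clique;
each fibre is then coloured with the `w v` colours of its vertex. Such a multicolouring exists by
Lovász's replication argument: if `w x ≥ 2`, multicolour `G` after lowering `w x` by one, and let
`S` be the class of a colour still used at `x`. Lowering `w` by one on all of `S` lowers the maximal
weight of a clique, since a clique missing `S` misses `x` and does not use all the colours. So `S`
can be taken as one colour class, and the rest is found by induction.

Indivisibility follows from closure under lexicographic products: given a set of vertices `S` of
`A[B]`, either `S` meets every fibre, so it contains a copy of `A`, or some fibre is a copy of `B`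
that avoids `S`. With `S` a colour class, this reduces the number of colours by one.
-/

open scoped Finset

universe u

theorem isNClique_map_embedding {V W : Type*} {G : SimpleGraph V} {H : SimpleGraph W}
    (f : G ↪g H) {n : ℕ} {t : Finset V} (ht : G.IsNClique n t) :
    H.IsNClique n (t.map f.toEmbedding) :=
  ht.map.mono ((map_le_iff_le_comap _ _ _).2 f.comap_eq.ge)

theorem cliqueNum_congr {V W : Type*} {G : SimpleGraph V} {H : SimpleGraph W} (f : G ≃g H) :
    G.cliqueNum = H.cliqueNum :=
  congrArg sSup <| Set.ext fun _ ↦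
    ⟨fun ⟨_, ht⟩ ↦ ⟨_, isNClique_map_embedding f.toEmbedding ht⟩,
      fun ⟨_, ht⟩ ↦ ⟨_, isNClique_map_embedding f.symm.toEmbedding ht⟩⟩

section Perfect

variable {V : Type} {G : SimpleGraph V}

theorem isPerfect_iff_forall_colorable :
    IsPerfect G ↔ ∀ s : Set V, (G.induce s).Colorable (G.induce s).cliqueNum :=
  forall_congr' fun s ↦ by
    rw [← chromaticNumber_le_iff_colorable]
    exact ⟨fun h ↦ h.le, fun h ↦ h.antisymm (G.induce s).cliqueNum_le_chromaticNumber⟩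

theorem IsPerfect.colorable_cliqueNum (hG : IsPerfect G) : G.Colorable G.cliqueNum := by
  rw [← colorable_congr (induceUnivIso G), ← cliqueNum_congr (induceUnivIso G)]
  exact isPerfect_iff_forall_colorable.1 hG Set.univ

theorem IsPerfect.of_embedding {W : Type} {H : SimpleGraph W} (hH : IsPerfect H) (f : G ↪g H) :
    IsPerfect G := by
  refine isPerfect_iff_forall_colorable.2 fun s ↦ ?_
  let φ : G.induce s ≃g H.induce (Set.range (f.comp (Embedding.induce s))) :=
    (f.comp (Embedding.induce s)).isoInduceRange
  rw [colorable_congr φ, cliqueNum_congr φ]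
  exact isPerfect_iff_forall_colorable.1 hH _

end Perfect

/-- A multicolouring of `G` with weights `w` and palette `C`: every vertex `v` receives a set `c v`
of `w v` colours from `C`, and adjacent vertices share no colour. It encodes a proper colouring of
the graph obtained from `G` by replacing each vertex `v` with a clique on `w v` vertices. -/
structure IsMulticoloring {V α : Type*} (G : SimpleGraph V) (w : V → ℕ) (C : Finset α)
    (c : V → Finset α) : Prop where
  subset (v : V) : c v ⊆ C
  card_eq (v : V) : #(c v) = w v
  disjoint {u v : V} : G.Adj u v → Disjoint (c u) (c v)

namespace IsMulticoloring

variable {V α : Type*} {G : SimpleGraph V} {w : V → ℕ} {C : Finset α} {c : V → Finset α}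

theorem pos_of_mem (hc : IsMulticoloring G w C c) {i : α} {v : V} (hi : i ∈ c v) : 0 < w v :=
  hc.card_eq v ▸ Finset.card_pos.2 ⟨i, hi⟩

theorem notMem (hc : IsMulticoloring G w C c) {i : α} (hi : i ∉ C) (v : V) : i ∉ c v :=
  fun hiv ↦ hi (hc.subset v hiv)

theorem sum_lt_card_of_isClique (hc : IsMulticoloring G w C c) {t : Finset V} (ht : G.IsClique t)
    {i : α} (hi : i ∈ C) (hit : ∀ v ∈ t, i ∉ c v) : ∑ v ∈ t, w v < #C := by
  classical
  have hdisj : (t : Set V).PairwiseDisjoint c := fun u hu v hv huv ↦ hc.disjoint (ht hu hv huv)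
  calc ∑ v ∈ t, w v = #(t.biUnion c) := by simp only [Finset.card_biUnion hdisj, hc.card_eq]
    _ < #C := Finset.card_lt_card <| Finset.ssubset_iff_subset_ne.2
      ⟨Finset.biUnion_subset.2 fun v _ ↦ hc.subset v, fun h ↦ by
        obtain ⟨v, hv, hiv⟩ := Finset.mem_biUnion.1 (h ▸ hi)
        exact hit v hv hiv⟩

open Classical in
theorem insert_color {i : α} (hc : IsMulticoloring G w (C.erase i) c) (hi : i ∈ C) {S : Set V}
    (hS : G.IsIndepSet S) :
    IsMulticoloring G (w + S.indicator 1) C fun v ↦ if v ∈ S then insert i (c v) else c v where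
  subset v := by
    have hcv : c v ⊆ C := (hc.subset v).trans (Finset.erase_subset i C)
    split_ifs
    exacts [Finset.insert_subset hi hcv, hcv]
  card_eq v := by
    have hiv : i ∉ c v := hc.notMem (Finset.notMem_erase i C) v
    by_cases hv : v ∈ S <;> simp [hv, hiv, hc.card_eq]
  disjoint {u v} huv := by
    have hi_notMem (x : V) : i ∉ c x := hc.notMem (Finset.notMem_erase i C) x
    have hne : ¬(u ∈ S ∧ v ∈ S) := fun h ↦ hS h.1 h.2 huv.ne huv
    split_ifs with hu hv hv
    · exact absurd ⟨hu, hv⟩ hne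
    · exact Finset.disjoint_insert_left.2 ⟨hi_notMem v, hc.disjoint huv⟩
    · exact Finset.disjoint_insert_right.2 ⟨hi_notMem u, hc.disjoint huv⟩
    · exact hc.disjoint huv

theorem isIndepSet_colorClass (hc : IsMulticoloring G w C c) (i : α) :
    G.IsIndepSet {v | i ∈ c v} :=
  fun _ hu _ hv _ huv ↦ Finset.disjoint_left.1 (hc.disjoint huv) hu hv

theorem sum_sub_colorClass_le_card_erase [DecidableEq α] {x : V} {i : α}
    (hc : IsMulticoloring G (w - Set.indicator {x} 1) C c) (hi : i ∈ c x) {t : Finset V}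
    (ht : G.IsClique t) (hw : ∑ v ∈ t, w v ≤ #C) :
    ∑ v ∈ t, (w v - Set.indicator {u | i ∈ c u} 1 v) ≤ #(C.erase i) := by
  have hiC : i ∈ C := hc.subset x hi
  rw [Finset.card_erase_of_mem hiC]
  refine Nat.le_pred_of_lt ?_
  by_cases hit : ∃ v ∈ t, i ∈ c v
  · obtain ⟨v, hvt, hiv⟩ := hit
    have hwv : 0 < w v := (hc.pos_of_mem hiv).trans_le tsub_le_self
    refine (Finset.sum_lt_sum (fun _ _ ↦ tsub_le_self) ⟨v, hvt, ?_⟩).trans_le hw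
    simpa [hiv] using hwv
  · push Not at hit
    refine (Finset.sum_le_sum fun v hv ↦ ?_).trans_lt (hc.sum_lt_card_of_isClique ht hiC hit)
    have hvx : v ≠ x := fun h ↦ hit v hv (h ▸ hi)
    simp [hvx]

end IsMulticoloring

theorem indicator_one_le {V : Type*} {w : V → ℕ} {S : Set V} (hS : ∀ v ∈ S, 0 < w v) :
    S.indicator 1 ≤ w :=
  Set.indicator_le fun v hv ↦ hS v hv

theorem sub_indicator_one_lt {V : Type*} {w : V → ℕ} {S : Set V} (hS : ∀ v ∈ S, 0 < w v)
    (hne : S.Nonempty) : w - S.indicator 1 < w := by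
  obtain ⟨x, hx⟩ := hne
  refine Pi.lt_def.2 ⟨tsub_le_self, x, ?_⟩
  simpa [hx] using hS x hx

section Lovasz

variable {V : Type} {G : SimpleGraph V} {α : Type*}

theorem IsPerfect.exists_isMulticoloring_of_le_one (hG : IsPerfect G) {w : V → ℕ} {C : Finset α}
    (hw_one : ∀ v, w v ≤ 1) (hw : ∀ t : Finset V, G.IsClique t → ∑ v ∈ t, w v ≤ #C) :
    ∃ c, IsMulticoloring G w C c := by
  classical
  let s : Set V := {v | w v = 1}
  have hs : (G.induce s).cliqueNum ≤ #C := by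
    obtain ⟨t, ht⟩ := (G.induce s).exists_isNClique_cliqueNum
    have hts := (isNClique_induce_iff ..).1 ht
    calc (G.induce s).cliqueNum = ∑ v ∈ t.map (.subtype _), w v := by
          rw [Finset.sum_map, ← ht.card_eq, Finset.card_eq_sum_ones]
          exact Finset.sum_congr rfl fun v _ ↦ v.2.symm
      _ ≤ #C := hw _ hts.isClique
  let f : (G.induce s).Coloring C :=
    ((isPerfect_iff_forall_colorable.1 hG s).mono hs).toColoring (Fintype.card_coe C).ge
  refine ⟨fun v ↦ if hv : v ∈ s then {(f ⟨v, hv⟩ : α)} else ∅, fun v ↦ ?_, fun v ↦ ?_,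
    fun {u v} huv ↦ ?_⟩
  · split_ifs <;> simp
  · split_ifs with hv
    · exact hv.symm
    · have hv_ne : w v ≠ 1 := hv
      have hv_le := hw_one v
      simp only [Finset.card_empty]
      omega
  · split_ifs with hu hv
    · exact Finset.disjoint_singleton.2 fun h ↦
        f.valid (v := ⟨u, hu⟩) (w := ⟨v, hv⟩) huv (Subtype.ext h)
    · exact Finset.disjoint_empty_right _
    · exact Finset.disjoint_empty_left _
    · exact Finset.disjoint_empty_left _

/-- Lovász's replication lemma in weighted form. -/
theorem IsPerfect.exists_isMulticoloring [Finite V] (hG : IsPerfect G) (w : V → ℕ) (C : Finset α)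
    (hw : ∀ t : Finset V, G.IsClique t → ∑ v ∈ t, w v ≤ #C) :
    ∃ c, IsMulticoloring G w C c := by
  classical
  induction w using WellFoundedLT.induction generalizing C with
  | ind w ih =>
  by_cases hw_one : ∀ v, w v ≤ 1
  · exact hG.exists_isMulticoloring_of_le_one hw_one hw
  obtain ⟨x, hx⟩ : ∃ x, 1 < w x := by simpa using hw_one
  obtain ⟨c, hc⟩ := ih (w - Set.indicator {x} 1)
    (sub_indicator_one_lt (by simpa using hx.pos) (Set.singleton_nonempty x)) C
    fun t ht ↦ (Finset.sum_le_sum fun v _ ↦ tsub_le_self).trans (hw t ht)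
  have hcx : 0 < #(c x) := by simpa [hc.card_eq] using hx
  obtain ⟨i, hi⟩ := Finset.card_pos.1 hcx
  let S : Set V := {v | i ∈ c v}
  have hS : ∀ v ∈ S, 0 < w v := fun v hv ↦ (hc.pos_of_mem hv).trans_le tsub_le_self
  obtain ⟨d, hd⟩ := ih (w - S.indicator 1) (sub_indicator_one_lt hS ⟨x, hi⟩) (C.erase i)
    fun t ht ↦ hc.sum_sub_colorClass_le_card_erase hi ht (hw t ht)
  have hdi := hd.insert_color (hc.subset x hi) (hc.isIndepSet_colorClass i)
  rw [tsub_add_cancel_of_le (indicator_one_le hS)] at hdi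
  exact ⟨_, hdi⟩

end Lovasz

section Modular

variable {X V : Type*} {Γ : SimpleGraph X} {G : SimpleGraph V} {π : X → V}

theorem sum_cliqueNum_fiber_le [Finite X] (hπ : G.comap π ≤ Γ) {t : Finset V} (ht : G.IsClique t) :
    ∑ v ∈ t, (Γ.induce (π ⁻¹' {v})).cliqueNum ≤ Γ.cliqueNum := by
  classical
  have exists_clique (v : V) : ∃ T : Finset X, (∀ p ∈ T, π p = v) ∧
      Γ.IsNClique (Γ.induce (π ⁻¹' {v})).cliqueNum T := by
    obtain ⟨T, hT⟩ := (Γ.induce (π ⁻¹' {v})).exists_isNClique_cliqueNum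
    refine ⟨T.map (.subtype _), fun p hp ↦ ?_, (isNClique_induce_iff ..).1 hT⟩
    obtain ⟨q, -, rfl⟩ := Finset.mem_map.1 hp
    exact q.2
  choose T hπT hT using exists_clique
  have hdisj : (t : Set V).PairwiseDisjoint T := fun u _ v _ huv ↦
    Finset.disjoint_left.2 fun p hpu hpv ↦ huv ((hπT u p hpu).symm.trans (hπT v p hpv))
  have hclique : Γ.IsClique (t.biUnion T) := by
    intro p hp q hq hpq
    obtain ⟨u, hu, hpu⟩ := Finset.mem_biUnion.1 hp
    obtain ⟨v, hv, hqv⟩ := Finset.mem_biUnion.1 hq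
    obtain rfl := hπT u p hpu
    obtain rfl := hπT v q hqv
    by_cases h : π p = π q
    · exact (hT (π q)).isClique (h ▸ hpu) hqv hpq
    · exact hπ (ht hu hv h)
  calc ∑ v ∈ t, (Γ.induce (π ⁻¹' {v})).cliqueNum = #(t.biUnion T) := by
        rw [Finset.card_biUnion hdisj]
        exact Finset.sum_congr rfl fun v _ ↦ (hT v).card_eq.symm
    _ ≤ Γ.cliqueNum := hclique.card_le_cliqueNum

theorem colorable_of_isMulticoloring {α : Type*} {w : V → ℕ} {C : Finset α}
    {c : V → Finset α} (hc : IsMulticoloring G w C c)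
    (hπ : ∀ p q, Γ.Adj p q → π p ≠ π q → G.Adj (π p) (π q))
    (hfiber : ∀ v, (Γ.induce (π ⁻¹' {v})).Colorable (w v)) : Γ.Colorable #C := by
  let e (v : V) : (Γ.induce (π ⁻¹' {v})).Coloring (c v) :=
    (hfiber v).toColoring (by rw [Fintype.card_coe, hc.card_eq])
  have he {p : X} {v : V} (hp : π p = v) : (e (π p) ⟨p, rfl⟩ : α) = e v ⟨p, hp⟩ := by
    subst hp; rfl
  let f : Γ.Coloring C := Coloring.mk
    (fun p ↦ ⟨e (π p) ⟨p, rfl⟩, hc.subset _ (e (π p) ⟨p, rfl⟩).2⟩) fun {p q} hpq h ↦ by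
      have heq : (e (π p) ⟨p, rfl⟩ : α) = e (π q) ⟨q, rfl⟩ := congrArg Subtype.val h
      by_cases hne : π p = π q
      · rw [he hne] at heq
        exact (e (π q)).valid (v := ⟨p, hne⟩) (w := ⟨q, rfl⟩) hpq (Subtype.ext heq)
      · exact Finset.disjoint_left.1 (hc.disjoint (hπ p q hpq hne))
          (e (π p) ⟨p, rfl⟩).2 (heq ▸ (e (π q) ⟨q, rfl⟩).2)
  simpa using f.colorable

end Modular

theorem IsPerfect.of_fibers {X V : Type} [Finite X] [Finite V] {Γ : SimpleGraph X}
    {G : SimpleGraph V} {π : X → V} (hG : IsPerfect G)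
    (hπ : ∀ p q, π p ≠ π q → (Γ.Adj p q ↔ G.Adj (π p) (π q)))
    (hfiber : ∀ v, IsPerfect (Γ.induce (π ⁻¹' {v}))) : IsPerfect Γ := by
  refine isPerfect_iff_forall_colorable.2 fun s ↦ ?_
  let ρ : s → V := fun p ↦ π p
  have hρ (p q : s) (h : ρ p ≠ ρ q) : (Γ.induce s).Adj p q ↔ G.Adj (ρ p) (ρ q) := hπ p q h
  have hρ_comap : G.comap ρ ≤ Γ.induce s := fun p q h ↦ (hρ p q (Adj.ne (G := G) h)).2 h
  have hρfiber (v : V) : IsPerfect ((Γ.induce s).induce (ρ ⁻¹' {v})) := by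
    refine (hfiber v).of_embedding ⟨⟨fun p ↦ ⟨p.1, p.2⟩, fun p q h ↦ ?_⟩, Iff.rfl⟩
    exact Subtype.ext (Subtype.ext (Subtype.mk.inj h))
  obtain ⟨c, hc⟩ := hG.exists_isMulticoloring _ (Finset.univ : Finset (Fin _)) fun t ht ↦ by
    rw [Finset.card_fin]
    exact sum_cliqueNum_fiber_le hρ_comap ht
  simpa using colorable_of_isMulticoloring hc (fun p q hpq h ↦ (hρ p q h).1 hpq) fun v ↦
    (hρfiber v).colorable_cliqueNum

/-- The lexicographic product of two graphs: every vertex of `G` is replaced by a copy of `H`. -/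
def lexProduct {V W : Type*} (G : SimpleGraph V) (H : SimpleGraph W) : SimpleGraph (V × W) where
  Adj := Prod.Lex G.Adj H.Adj
  symm := ⟨fun p q h ↦ by
    simp only [Prod.lex_iff] at h ⊢
    exact h.imp Adj.symm fun h ↦ ⟨h.1.symm, h.2.symm⟩⟩
  loopless := ⟨fun p h ↦ by simp [Prod.lex_iff] at h⟩

namespace lexProduct

variable {V W : Type*} {G : SimpleGraph V} {H : SimpleGraph W}

theorem adj_iff {p q : V × W} :
    (lexProduct G H).Adj p q ↔ G.Adj p.1 q.1 ∨ p.1 = q.1 ∧ H.Adj p.2 q.2 :=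
  Prod.lex_iff

/-- The embedding of the second factor as the fibre over `v`. -/
def fiberEmbedding (G : SimpleGraph V) (H : SimpleGraph W) (v : V) : H ↪g lexProduct G H where
  toFun x := (v, x)
  inj' := Prod.mk_right_injective v
  map_rel_iff' := by simp [adj_iff]

/-- The embedding of the first factor as the graph of a function `g`. -/
def graphEmbedding (G : SimpleGraph V) (H : SimpleGraph W) (g : V → W) : G ↪g lexProduct G H where
  toFun v := (v, g v)
  inj' _ _ h := congrArg Prod.fst h
  map_rel_iff' {u v} := by
    refine adj_iff.trans (or_iff_left ?_)
    rintro ⟨h : u = v, hadj⟩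
    exact hadj.ne (congrArg g h)

theorem exists_embedding_mem_or_notMem (G : SimpleGraph V) (H : SimpleGraph W) (S : Set (V × W)) :
    (∃ f : G ↪g lexProduct G H, ∀ v, f v ∈ S) ∨ ∃ f : H ↪g lexProduct G H, ∀ x, f x ∉ S := by
  by_cases h : ∀ v, ∃ x, (v, x) ∈ S
  · choose g hg using h
    exact .inl ⟨graphEmbedding G H g, hg⟩
  · push Not at h
    obtain ⟨v, hv⟩ := h
    exact .inr ⟨fiberEmbedding G H v, hv⟩

end lexProduct

theorem IsPerfect.lexProduct {V W : Type} [Finite V] [Finite W] {G : SimpleGraph V}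
    {H : SimpleGraph W} (hG : IsPerfect G) (hH : IsPerfect H) : IsPerfect (lexProduct G H) := by
  refine hG.of_fibers (π := Prod.fst) (fun p q h ↦ lexProduct.adj_iff.trans (by simp [h]))
    fun v ↦ hH.of_embedding ⟨⟨fun p ↦ p.1.2, fun p q h ↦ ?_⟩, fun {p q} ↦ ?_⟩
  · exact Subtype.ext (Prod.ext (p.2.trans q.2.symm) h)
  · have hpq : p.1.1 = q.1.1 := p.2.trans q.2.symm
    change H.Adj p.1.2 q.1.2 ↔ (_root_.lexProduct G H).Adj p q
    simp [lexProduct.adj_iff, hpq]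

theorem exists_monochromatic_embedding {P : ∀ {V : Type u}, SimpleGraph V → Prop}
    (hP : ∀ {V W : Type u} {G : SimpleGraph V} {H : SimpleGraph W}, P G → P H → P (lexProduct G H))
    {V : Type u} {A : SimpleGraph V} (hA : P A) {α : Type*} (C : Finset α) :
    ∃ (W : Type u) (B : SimpleGraph W), P B ∧
      ∀ c : W → α, (∀ x, c x ∈ C) → ∃ f : A ↪g B, ∀ x y, c (f x) = c (f y) := by
  classical
  induction C using Finset.induction_on with
  | empty => exact ⟨V, A, hA, fun c hc ↦ ⟨.refl, fun x ↦ absurd (hc x) (Finset.notMem_empty _)⟩⟩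
  | insert a C _ ih =>
    obtain ⟨W, B, hB, hmono⟩ := ih
    refine ⟨V × W, lexProduct A B, hP hA hB, fun c hc ↦ ?_⟩
    obtain ⟨f, hf⟩ | ⟨f, hf⟩ := lexProduct.exists_embedding_mem_or_notMem A B {p | c p = a}
    · exact ⟨f, fun x y ↦ (hf x).trans (hf y).symm⟩
    · obtain ⟨g, hg⟩ := hmono (c ∘ f) fun x ↦ Finset.mem_of_mem_insert_of_ne (hc (f x)) (hf x)
      exact ⟨g.trans f, hg⟩

/-- The class of all finite perfect graphs is indivisible. -/
theorem perfect_indivisible :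
    Indivisible (fun n (G : SimpleGraph (Fin n)) => IsPerfect G) := by
  intro n A hA k _
  obtain ⟨W, B, ⟨_, hB⟩, hmono⟩ :=
    exists_monochromatic_embedding (P := fun {V} G ↦ Finite V ∧ IsPerfect G)
      (fun ⟨_, hG⟩ ⟨_, hH⟩ ↦ ⟨inferInstance, hG.lexProduct hH⟩) ⟨inferInstance, hA⟩
      (Finset.univ : Finset (Fin k))
  have := Fintype.ofFinite W
  let φ : B ≃g B.overFin rfl := B.overFinIso rfl
  refine ⟨_, B.overFin rfl, hB.of_embedding φ.symm.toEmbedding, fun c ↦ ?_⟩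
  obtain ⟨f, hf⟩ := hmono (c ∘ φ) fun x ↦ Finset.mem_univ _
  exact ⟨f.trans φ.toEmbedding, hf⟩
end
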